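/- Let H be a complex Hilbert space and S : dom(S) ⊆ H → H a densely defined skew-selfadjoint operator such that the embedding dom(S) ↪ H is compact (every sequence (xₙ) in dom(S) with (‖xₙ‖) and (‖S xₙ‖) bounded has a subsequence converging in H). Then the reduced operator Ŝ : dom(S) ∩ ker(S)^⊥ → ran(S), x ↦ S x, is a bijection whose inverse Ŝ⁻¹ : ran(S) → H is a compact (bounded) operator; equivalently, for every bounded sequence (yₙ) in ran(S), the unique solutions xₙ ∈ dom(S) ∩ ker(S)^⊥ of S xₙ = yₙ possess a subsequence converging in H. -/

import Mathlib

noncomputable section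

open LinearPMap
open scoped ComplexInnerProductSpace

/-- The range of a partially defined linear operator, as a submodule. -/
def ranSub {E F : Type*} [NormedAddCommGroup E] [NormedAddCommGroup F]
    [InnerProductSpace ℂ E] [InnerProductSpace ℂ F] (S : E →ₗ.[ℂ] F) : Submodule ℂ F :=
  LinearMap.range S.toFun

/-- The kernel of a partially defined linear operator, as a submodule of the ambient space. -/
def kerSub {E F : Type*} [NormedAddCommGroup E] [NormedAddCommGroup F]
    [InnerProductSpace ℂ E] [InnerProductSpace ℂ F] (S : E →ₗ.[ℂ] F) : Submodule ℂ E :=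
  (LinearMap.ker S.toFun).map S.domain.subtype

/-!
A skew-selfadjoint operator is closed, being the negative of its adjoint, and closedness is all that
is needed. The kernel is then closed, so projecting it away turns any preimage of `y ∈ ran S` into
one orthogonal to `ker S`. If no bound `‖x‖ ≤ c ‖S x‖` held on `dom S ∩ (ker S)ᗮ`, there would be
unit vectors `xₙ` there with `S xₙ → 0`; by compactness a subsequence converges, and its limit is a
unit vector of `ker S ∩ (ker S)ᗮ = 0`. With this bound, boundedness of `S xₙ` makes `xₙ` bounded in
the graph norm, and the compact embedding applies once more.
-/

open Filter
open scoped Topology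

section Closed

variable {R E F : Type*} [CommRing R] [AddCommGroup E] [Module R E] [TopologicalSpace E]
  [AddCommGroup F] [Module R F] [TopologicalSpace F] {S : E →ₗ.[R] F}

lemma isClosed_of_isClosed_neg [ContinuousNeg F] (hS : (-S).IsClosed) : S.IsClosed := by
  have hgraph : (S.graph : Set (E × F)) = Prod.map id Neg.neg ⁻¹' ((-S).graph : Set (E × F)) := by
    ext p
    simp [LinearPMap.mem_graph_iff]
  rw [LinearPMap.IsClosed, hgraph]
  exact hS.preimage (by fun_prop)

lemma exists_coe_eq_and_map_eq_of_tendsto (hS : S.IsClosed) {ι : Type*} {f : Filter ι} [f.NeBot]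
    {x : ι → S.domain} {a : E} {b : F} (hx : Tendsto (fun i => (x i : E)) f (𝓝 a))
    (hSx : Tendsto (fun i => S (x i)) f (𝓝 b)) :
    ∃ z : S.domain, (z : E) = a ∧ S z = b := by
  have hab : (a, b) ∈ S.graph :=
    hS.mem_of_tendsto (hx.prodMk_nhds hSx) (.of_forall fun i => S.mem_graph (x i))
  exact (LinearPMap.mem_graph_iff S).1 hab

end Closed

section CompactDomainEmbedding

variable {𝕜 E F : Type*} [RCLike 𝕜] [NormedAddCommGroup E] [NormedSpace 𝕜 E]
  [NormedAddCommGroup F] [NormedSpace 𝕜 F] {S : E →ₗ.[𝕜] F} {M : Submodule 𝕜 E}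

/-- Compactness of the embedding `dom S ↪ E` for the graph norm, in sequential form: boundedness in
the graph norm is split into boundedness of `x n` and of `S (x n)`. -/
def HasCompactDomainEmbedding (S : E →ₗ.[𝕜] F) : Prop :=
  ∀ x : ℕ → S.domain, (∃ C, ∀ n, ‖(x n : E)‖ ≤ C) → (∃ C, ∀ n, ‖S (x n)‖ ≤ C) →
    ∃ φ : ℕ → ℕ, StrictMono φ ∧ ∃ l : E, Tendsto (fun n => (x (φ n) : E)) atTop (𝓝 l)

namespace HasCompactDomainEmbedding

lemma exists_pos_le_norm_map_of_norm_eq_one (hcomp : HasCompactDomainEmbedding S)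
    (hS : S.IsClosed) (hM : IsClosed (M : Set E)) (hinj : Set.InjOn S {x | (x : E) ∈ M}) :
    ∃ ε > 0, ∀ x : S.domain, (x : E) ∈ M → ‖(x : E)‖ = 1 → ε ≤ ‖S x‖ := by
  by_contra! hsmall
  choose x hxM hx_norm hSx_lt using fun n : ℕ => hsmall (1 / (n + 1)) Nat.one_div_pos_of_nat
  have hSx : Tendsto (fun n => S (x n)) atTop (𝓝 0) :=
    squeeze_zero_norm (fun n => (hSx_lt n).le) tendsto_one_div_add_atTop_nhds_zero_nat
  have hSx_bdd : ∃ C, ∀ n, ‖S (x n)‖ ≤ C :=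
    hSx.norm.bddAbove_range.imp fun _ hC n => hC (Set.mem_range_self n)
  obtain ⟨φ, hφ, l, hl⟩ := hcomp x ⟨1, fun n => (hx_norm n).le⟩ hSx_bdd
  have hl_norm : ‖l‖ = 1 := tendsto_nhds_unique hl.norm (by simp [hx_norm])
  have hlM : l ∈ M := hM.mem_of_tendsto hl (.of_forall fun n => hxM (φ n))
  obtain ⟨z, rfl, hSz⟩ := exists_coe_eq_and_map_eq_of_tendsto hS hl (hSx.comp hφ.tendsto_atTop)
  have hz : z = 0 := hinj hlM M.zero_mem (hSz.trans S.map_zero.symm)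
  simp [hz] at hl_norm

lemma exists_norm_le_mul_norm_map (hcomp : HasCompactDomainEmbedding S)
    (hS : S.IsClosed) (hM : IsClosed (M : Set E)) (hinj : Set.InjOn S {x | (x : E) ∈ M}) :
    ∃ c ≥ 0, ∀ x : S.domain, (x : E) ∈ M → ‖(x : E)‖ ≤ c * ‖S x‖ := by
  obtain ⟨ε, hε, hεS⟩ := hcomp.exists_pos_le_norm_map_of_norm_eq_one hS hM hinj
  refine ⟨ε⁻¹, by positivity, fun x hxM => ?_⟩
  rcases eq_or_ne (x : E) 0 with hx | hx
  · rw [hx, norm_zero]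
    positivity
  · have hunit : ε ≤ ‖S (((‖(x : E)‖⁻¹ : ℝ) : 𝕜) • x)‖ :=
      hεS _ (M.smul_mem _ hxM) (by simpa using norm_smul_inv_norm (𝕜 := 𝕜) hx)
    rw [LinearPMap.map_smul, norm_smul, RCLike.norm_ofReal, abs_inv, abs_norm,
      le_inv_mul_iff₀ (norm_pos_iff.2 hx)] at hunit
    rwa [le_inv_mul_iff₀ hε, mul_comm]

theorem exists_tendsto_subseq_of_injOn (hcomp : HasCompactDomainEmbedding S)
    (hS : S.IsClosed) (hM : IsClosed (M : Set E)) (hinj : Set.InjOn S {x | (x : E) ∈ M})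
    {x : ℕ → S.domain} (hxM : ∀ n, (x n : E) ∈ M) (hSx : ∃ C, ∀ n, ‖S (x n)‖ ≤ C) :
    ∃ φ : ℕ → ℕ, StrictMono φ ∧ ∃ l : E, Tendsto (fun n => (x (φ n) : E)) atTop (𝓝 l) := by
  obtain ⟨c, hc, hcS⟩ := hcomp.exists_norm_le_mul_norm_map hS hM hinj
  obtain ⟨C, hC⟩ := hSx
  exact hcomp x ⟨c * C, fun n => (hcS (x n) (hxM n)).trans (by gcongr; exact hC n)⟩ ⟨C, hC⟩

end HasCompactDomainEmbedding

end CompactDomainEmbedding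

section Kernel

variable {E F : Type*} [NormedAddCommGroup E] [NormedAddCommGroup F]
  [InnerProductSpace ℂ E] [InnerProductSpace ℂ F] {S : E →ₗ.[ℂ] F}

lemma coe_mem_kerSub_iff {x : S.domain} : (x : E) ∈ kerSub S ↔ S x = 0 := by
  simp [kerSub]

lemma isClosed_kerSub (hS : S.IsClosed) : IsClosed (kerSub S : Set E) := by
  have hker : (kerSub S : Set E) = (fun x => (x, (0 : F))) ⁻¹' (S.graph : Set (E × F)) := by
    ext x
    simp [kerSub, LinearPMap.mem_graph_iff, and_comm]
  rw [hker]
  exact hS.preimage (by fun_prop)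

lemma injOn_orthogonal_kerSub (S : E →ₗ.[ℂ] F) :
    Set.InjOn S {x | (x : E) ∈ (kerSub S)ᗮ} := by
  intro x hx x' hx' hSxx'
  have hker : ((x - x' : S.domain) : E) ∈ kerSub S :=
    coe_mem_kerSub_iff.2 (by rw [S.map_sub, hSxx', sub_self])
  have hzero : ((x - x' : S.domain) : E) = 0 :=
    (kerSub S).orthogonal_disjoint.le_bot ⟨hker, Submodule.sub_mem _ hx hx'⟩
  exact sub_eq_zero.1 (Subtype.ext hzero)

lemma exists_mem_orthogonal_kerSub_map_eq [(kerSub S).HasOrthogonalProjection] {y : F}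
    (hy : y ∈ ranSub S) : ∃ x : S.domain, (x : E) ∈ (kerSub S)ᗮ ∧ S x = y := by
  obtain ⟨u, rfl⟩ := hy
  obtain ⟨_, ⟨k, hk, rfl⟩, z, hz, hu⟩ := (kerSub S).exists_add_mem_mem_orthogonal (u : E)
  have huk : ((u - k : S.domain) : E) = z := by simp [hu]
  exact ⟨u - k, huk ▸ hz, (S.map_sub u k).trans (sub_eq_self.2 hk)⟩

end Kernel

theorem reduced_operator_bijective_compact_inverse_general {E F : Type*} [NormedAddCommGroup E]
    [NormedAddCommGroup F] [InnerProductSpace ℂ E] [InnerProductSpace ℂ F] [CompleteSpace E]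
    {S : E →ₗ.[ℂ] F} (hS : S.IsClosed) (hcomp : HasCompactDomainEmbedding S) :
    (∀ y ∈ ranSub S, ∃ (x : S.domain), (x : E) ∈ (kerSub S)ᗮ ∧ S x = y ∧
        ∀ (x' : S.domain), (x' : E) ∈ (kerSub S)ᗮ → S x' = y → (x' : E) = (x : E)) ∧
      (∀ (y : ℕ → F), (∀ n, y n ∈ ranSub S) → (∃ C, ∀ n, ‖y n‖ ≤ C) →
        ∀ (x : ℕ → S.domain), (∀ n, ((x n : E) ∈ (kerSub S)ᗮ ∧ S (x n) = y n)) →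
          ∃ φ : ℕ → ℕ, StrictMono φ ∧
            ∃ l : E, Tendsto (fun n => (x (φ n) : E)) atTop (𝓝 l)) := by
  have hinj := injOn_orthogonal_kerSub S
  refine ⟨fun y hy => ?_, fun y _ hy_bdd x hx => ?_⟩
  · have : CompleteSpace (kerSub S) := (isClosed_kerSub hS).completeSpace_coe
    obtain ⟨x, hx, hSx⟩ := exists_mem_orthogonal_kerSub_map_eq hy
    exact ⟨x, hx, hSx, fun x' hx' hSx' => congrArg _ (hinj hx' hx (hSx'.trans hSx.symm))⟩
  · have hSx_bdd : ∃ C, ∀ n, ‖S (x n)‖ ≤ C := by simpa only [(hx _).2] using hy_bdd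
    exact hcomp.exists_tendsto_subseq_of_injOn hS (kerSub S).isClosed_orthogonal hinj
      (fun n => (hx n).1) hSx_bdd

/-- if `S` is a densely defined skew-selfadjoint operator on a complex Hilbert
space `H` with compact embedding `dom S ↪ H`, then the reduced operator
`Ŝ : dom S ∩ (ker S)ᗮ → ran S`, `x ↦ S x`, is a bijection whose inverse is compact: for every
bounded sequence `yₙ` in `ran S` the unique solutions `xₙ ∈ dom S ∩ (ker S)ᗮ` of `S xₙ = yₙ`
possess a subsequence converging in `H`. -/
theorem reduced_operator_bijective_compact_inverse {H : Type*} [NormedAddCommGroup H] [InnerProductSpace ℂ H]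
    [CompleteSpace H] (S : H →ₗ.[ℂ] H)
    (hdense : Dense (S.domain : Set H)) (hskew : S.adjoint = -S)
    (hcomp : ∀ (x : ℕ → H) (hx : ∀ n, x n ∈ S.domain),
      (∃ C, ∀ n, ‖x n‖ ≤ C) → (∃ C, ∀ n, ‖S ⟨x n, hx n⟩‖ ≤ C) →
      ∃ φ : ℕ → ℕ, StrictMono φ ∧
        ∃ l : H, Filter.Tendsto (fun n => x (φ n)) Filter.atTop (nhds l)) :
    (∀ y ∈ ranSub S, ∃ (x : S.domain), (x : H) ∈ (kerSub S)ᗮ ∧ S x = y ∧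
        ∀ (x' : S.domain), (x' : H) ∈ (kerSub S)ᗮ → S x' = y → (x' : H) = (x : H)) ∧
      (∀ (y : ℕ → H), (∀ n, y n ∈ ranSub S) → (∃ C, ∀ n, ‖y n‖ ≤ C) →
        ∀ (x : ℕ → S.domain), (∀ n, ((x n : H) ∈ (kerSub S)ᗮ ∧ S (x n) = y n)) →
          ∃ φ : ℕ → ℕ, StrictMono φ ∧
            ∃ l : H, Filter.Tendsto (fun n => (x (φ n) : H)) Filter.atTop (nhds l)) := by
  exact reduced_operator_bijective_compact_inverse_general
    (isClosed_of_isClosed_neg (hskew ▸ adjoint_isClosed hdense))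
    fun x => hcomp (fun n => x n) fun n => (x n).2
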